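/- Let γ : I → ℝ be twice continuously differentiable with 1+γ(θ) > 0 for all θ ∈ I, and let ℘_γ : I → ℝ be the (unique) continuous function with 𝔽(γ, ℘_γ) = 0. Then there exist δ > 0 and η > 0 such that for every continuous ℘ : I → ℝ with sup_{θ∈I} |℘(θ) − ℘_γ(θ)| < δ there exists exactly one twice continuously differentiable h : I → ℝ satisfying h(π/2) = γ(π/2), h'(π/2) = γ'(π/2), sup_{θ∈I}(|h(θ)−γ(θ)| + |h'(θ)−γ'(θ)| + |h''(θ)−γ''(θ)|) < η, and 𝔽(h, ℘) = 0; moreover, the resulting map ℘ ↦ h sends ℘_γ to γ and is continuous from the supremum norm on C(I) to the C² norm. -/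

import Mathlib

/-- The equatorial strip `I = [π/2 − ε, π/2 + ε]` with `ε = 0.016`. -/
noncomputable def Istrip : Set ℝ :=
  Set.Icc (Real.pi / 2 - 0.016) (Real.pi / 2 + 0.016)

/-- The characteristic curve `s ↦ θ̄(s)`. -/
noncomputable def thetaBar (s : ℝ) : ℝ :=
  Real.arccos ((1 - Real.exp (2 * s)) / (1 + Real.exp (2 * s)))

/-- The function `f(θ) = ½·ln((1−cos θ)/(1+cos θ))`. -/
noncomputable def fChar (θ : ℝ) : ℝ :=
  (1 / 2) * Real.log ((1 - Real.cos θ) / (1 + Real.cos θ))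

/-- `𝓕(ξ,θ) = ∫₀^{f(θ)} g·ρ_θ(ξ·(e^s+e^{−s})/2, θ̄(s)) ds`. -/
noncomputable def calF (g : ℝ) (ρθ : ℝ → ℝ → ℝ) (ξ θ : ℝ) : ℝ :=
  ∫ s in (0:ℝ)..(fChar θ),
    g * ρθ (ξ * (Real.exp s + Real.exp (-s)) / 2) (thetaBar s)

/-- The nondimensionalized Bernoulli functional `𝔽(h,℘)(θ)`. -/
noncomputable def FF (g R σ Patm a b : ℝ) (ρ ρθ : ℝ → ℝ → ℝ) (F : ℝ → ℝ)
    (h ℘ : ℝ → ℝ) (θ : ℝ) : ℝ :=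
  -℘ θ - (g / Patm) * (∫ s in a..(R * (1 + h θ)), ρ s θ)
    + (1 / Patm) *
        (∫ s in (a * Real.sin θ)..(R * (1 + h θ) * Real.sin θ),
          (F s / s + calF g ρθ s θ))
    - (σ / (R * Patm)) *
        ((2 * (1 + h θ)^2 + 3 * (deriv h θ)^2) /
            (((1 + h θ)^2 + (deriv h θ)^2) ^ ((3:ℝ)/2))
          - deriv (deriv h) θ * (1 + h θ) /
            (((1 + h θ)^2 + (deriv h θ)^2) ^ ((3:ℝ)/2))
          - Real.cot θ * deriv h θ /
            ((1 + h θ) * (((1 + h θ)^2 + (deriv h θ)^2) ^ ((1:ℝ)/2))))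
    + (b / Patm + (1 / Patm) *
        ∫ s in (Real.pi / 2)..θ,
          (F (a * Real.sin s) * Real.cot s
            + calF g ρθ (a * Real.sin s) s * a * Real.cos s))

open Set Filter Metric MeasureTheory
open scoped Topology NNReal

/-!
While `1 + h` is positive, the Bernoulli condition can be solved for `h''`. The right-hand side is
continuous in `θ` and locally Lipschitz in `(h, h', ℘)`, because `h` enters the integrals of the
merely continuous data only through their endpoints. With the 1-jet of `h` prescribed at `π/2`, the
surface pressure `℘` is thus a parameter in an initial value problem. On a compact tube around the
reference curve `((γ, γ'), ℘_γ)` the Lipschitz constant is uniform, and Grönwall's inequality there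
gives existence on the whole strip, uniqueness, and Lipschitz dependence of `h` on `℘` in the `C²`
norm.
-/

section LipschitzFamily

/-- The local hypothesis of the Picard–Lindelöf theorem for a family of maps: `f` is jointly
continuous at `(t, z)`, and near that point it is Lipschitz in its second argument, uniformly in
the first. -/
structure LipschitzFamilyAt {T Z W : Type*} [TopologicalSpace T] [PseudoEMetricSpace Z]
    [PseudoEMetricSpace W] (f : T → Z → W) (t : T) (z : Z) : Prop where
  continuousAt : ContinuousAt (Function.uncurry f) (t, z)
  exists_lipschitzOnWith : ∃ K : ℝ≥0, ∃ V ∈ 𝓝 z, ∀ᶠ s in 𝓝 t, LipschitzOnWith K (f s) V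

namespace LipschitzFamilyAt

variable {T Z W Y : Type*} [TopologicalSpace T] [PseudoEMetricSpace Z] [PseudoEMetricSpace W]
  [PseudoEMetricSpace Y] {t : T} {z : Z}

theorem of_continuousAt {c : T → W} (hc : ContinuousAt c t) :
    LipschitzFamilyAt (fun s (_ : Z) => c s) t z where
  continuousAt := hc.fst'
  exists_lipschitzOnWith := ⟨0, univ, univ_mem, .of_forall fun s =>
    (LipschitzWith.const (c s)).lipschitzOnWith⟩

theorem of_contDiffAt {T Z W : Type*} [NormedAddCommGroup T] [NormedSpace ℝ T]
    [NormedAddCommGroup Z] [NormedSpace ℝ Z] [NormedAddCommGroup W] [NormedSpace ℝ W]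
    {f : T → Z → W} {t : T} {z : Z} (hf : ContDiffAt ℝ 1 (Function.uncurry f) (t, z)) :
    LipschitzFamilyAt f t z where
  continuousAt := hf.continuousAt
  exists_lipschitzOnWith := by
    obtain ⟨K, N, hN, hK⟩ := hf.exists_lipschitzOnWith
    obtain ⟨U, hU, V, hV, hUV⟩ := mem_nhds_prod_iff.1 hN
    refine ⟨K, V, hV, mem_of_superset hU fun s hs => ?_⟩
    have hsV : MapsTo (Prod.mk s) V N := fun w hw => hUV ⟨hs, hw⟩
    rw [← mul_one K]
    exact hK.comp (LipschitzWith.prodMk_left s).lipschitzOnWith hsV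

theorem comp {g : T → W → Y} {f : T → Z → W} (hg : LipschitzFamilyAt g t (f t z))
    (hf : LipschitzFamilyAt f t z) : LipschitzFamilyAt (fun s w => g s (f s w)) t z where
  continuousAt := ContinuousAt.comp (f := fun p : T × Z => (p.1, f p.1 p.2)) (x := (t, z))
    hg.continuousAt (continuousAt_fst.prodMk hf.continuousAt)
  exists_lipschitzOnWith := by
    obtain ⟨L, N, hN, hL⟩ := hg.exists_lipschitzOnWith
    obtain ⟨K, V, hV, hK⟩ := hf.exists_lipschitzOnWith
    obtain ⟨U, hU, V', hV', hUV⟩ := mem_nhds_prod_iff.1 (hf.continuousAt hN)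
    refine ⟨L * K, V ∩ V', inter_mem hV hV', ?_⟩
    filter_upwards [hL, hK, hU] with s hLs hKs hs
    have hsN : MapsTo (f s) (V ∩ V') N := fun w hw => hUV (mk_mem_prod hs hw.2)
    exact hLs.comp (hKs.mono inter_subset_left) hsN

theorem prodMk {f : T → Z → W} {g : T → Z → Y} (hf : LipschitzFamilyAt f t z)
    (hg : LipschitzFamilyAt g t z) : LipschitzFamilyAt (fun s w => (f s w, g s w)) t z where
  continuousAt := hf.continuousAt.prodMk hg.continuousAt
  exists_lipschitzOnWith := by
    obtain ⟨K, V, hV, hK⟩ := hf.exists_lipschitzOnWith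
    obtain ⟨L, V', hV', hL⟩ := hg.exists_lipschitzOnWith
    refine ⟨max K L, V ∩ V', inter_mem hV hV', ?_⟩
    filter_upwards [hK, hL] with s hKs hLs
    exact (hKs.mono inter_subset_left).prodMk (hLs.mono inter_subset_right)

theorem of_continuousAt_left {f : T → Z → W} (hf : ContinuousAt (fun s => f s z) t)
    (hK : ∃ K : ℝ≥0, ∃ V ∈ 𝓝 z, ∀ᶠ s in 𝓝 t, LipschitzOnWith K (f s) V) :
    LipschitzFamilyAt f t z where
  continuousAt := by
    obtain ⟨K, V, hV, hK⟩ := hK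
    have hlim : Tendsto (fun p : T × Z => K * edist p.2 z + edist (f p.1 z) (f t z)) (𝓝 (t, z))
        (𝓝 0) := by
      have hz : Tendsto (fun p : T × Z => K * edist p.2 z) (𝓝 (t, z)) (𝓝 (K * 0)) :=
        ENNReal.Tendsto.const_mul (tendsto_iff_edist_tendsto_0.1 continuousAt_snd)
          (Or.inr ENNReal.coe_ne_top)
      simpa using hz.add (tendsto_iff_edist_tendsto_0.1 hf.fst')
    refine tendsto_iff_edist_tendsto_0.2 (tendsto_of_tendsto_of_tendsto_of_le_of_le'
      tendsto_const_nhds hlim (.of_forall fun _ => zero_le) ?_)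
    filter_upwards [prod_mem_nhds hK hV] with p ⟨hKs, hp⟩
    exact (edist_triangle _ (f p.1 z) _).trans (add_le_add_left (hKs hp (mem_of_mem_nhds hV)) _)
  exists_lipschitzOnWith := hK

end LipschitzFamilyAt

theorem exists_lipschitzOnWith_closedBall {T Z W : Type*} [TopologicalSpace T]
    [PseudoMetricSpace Z] [PseudoMetricSpace W] {I : Set T} (hI : IsCompact I) {f : T → Z → W}
    {z₀ : T → Z} (hz₀ : ContinuousOn z₀ I) (hf : ∀ t ∈ I, LipschitzFamilyAt f t (z₀ t)) :
    ∃ r > 0, ∃ K : ℝ≥0, ∀ t ∈ I, LipschitzOnWith K (f t) (closedBall (z₀ t) r) := by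
  refine hI.induction_on (p := fun s => ∃ r > 0, ∃ K : ℝ≥0, ∀ t ∈ s,
    LipschitzOnWith K (f t) (closedBall (z₀ t) r)) ⟨1, one_pos, 0, by simp⟩ ?_ ?_ ?_
  · rintro s s' hss ⟨r, hr, K, h⟩
    exact ⟨r, hr, K, fun t ht => h t (hss ht)⟩
  · rintro s s' ⟨r, hr, K, h⟩ ⟨r', hr', K', h'⟩
    refine ⟨min r r', lt_min hr hr', max K K', ?_⟩
    rintro t (ht | ht)
    · exact ((h t ht).mono (closedBall_subset_closedBall (min_le_left _ _))).weaken
        (le_max_left _ _)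
    · exact ((h' t ht).mono (closedBall_subset_closedBall (min_le_right _ _))).weaken
        (le_max_right _ _)
  · intro t ht
    obtain ⟨K, V, hV, hK⟩ := (hf t ht).exists_lipschitzOnWith
    obtain ⟨r, hr, hrV⟩ := Metric.nhds_basis_closedBall.mem_iff.1 hV
    have hz : ∀ᶠ s in 𝓝[I] t, dist (z₀ s) (z₀ t) ≤ r / 2 :=
      (hz₀ t ht).eventually (closedBall_mem_nhds _ (half_pos hr))
    refine ⟨{s | dist (z₀ s) (z₀ t) ≤ r / 2 ∧ LipschitzOnWith K (f s) V},
      hz.and (hK.filter_mono nhdsWithin_le_nhds), r / 2, half_pos hr, K, ?_⟩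
    rintro s ⟨hs, hKs⟩
    exact hKs.mono ((closedBall_subset_closedBall' (by linarith)).trans hrV)

theorem exists_closedBall_subset_lipschitzOnWith {T Z W : Type*} [TopologicalSpace T]
    [PseudoMetricSpace Z] [PseudoMetricSpace W] {I : Set T} (hI : IsCompact I) {f : T → Z → W}
    {z₀ : T → Z} (hz₀ : ContinuousOn z₀ I) {Ω : Set Z} (hΩ : IsOpen Ω) (hzΩ : MapsTo z₀ I Ω)
    (hf : ∀ t ∈ I, LipschitzFamilyAt f t (z₀ t)) :
    ∃ r > 0, ∃ K : ℝ≥0, ∀ t ∈ I, closedBall (z₀ t) r ⊆ Ω ∧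
      LipschitzOnWith K (f t) (closedBall (z₀ t) r) := by
  obtain ⟨r, hr, K, hK⟩ := exists_lipschitzOnWith_closedBall hI hz₀ hf
  obtain ⟨s, hs, hsΩ⟩ := (hI.image_of_continuousOn hz₀).exists_cthickening_subset_open hΩ
    hzΩ.image_subset
  refine ⟨min r s, lt_min hr hs, K, fun t ht => ⟨?_, ?_⟩⟩
  · exact (closedBall_subset_closedBall (min_le_right _ _)).trans
      ((closedBall_subset_cthickening (mem_image_of_mem z₀ ht) s).trans hsΩ)
  · exact (hK t ht).mono (closedBall_subset_closedBall (min_le_left _ _))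

end LipschitzFamily

section ParametricIntegral

variable {T E : Type*} [TopologicalSpace T] [NormedAddCommGroup E] [NormedSpace ℝ E]
  {f : T → ℝ → E} {x₀ : T}

theorem continuousAt_intervalIntegral_of_continuousOn {U : Set T} {s t : ℝ}
    (hf : ContinuousOn (Function.uncurry f) (U ×ˢ uIcc s t)) (hU : U ∈ 𝓝 x₀) :
    ContinuousAt (fun x => ∫ w in s..t, f x w) x₀ := by
  have hint : ∀ x ∈ U, IntervalIntegrable (f x) volume s t := fun x hx =>
    (hf.comp (f := fun w => (x, w)) (by fun_prop) fun w hw => ⟨hx, hw⟩).intervalIntegrable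
  refine Metric.continuousAt_iff'.2 fun e he => ?_
  obtain ⟨δ, hδ, hδe⟩ := exists_pos_mul_lt he |t - s|
  obtain ⟨V, hV, hVδ⟩ :=
    isCompact_uIcc.mem_uniformity_of_prod hf (mem_of_mem_nhds hU) (dist_mem_uniformity hδ)
  rw [nhdsWithin_eq_nhds.2 hU] at hV
  filter_upwards [hU, hV] with x hx hxV
  rw [dist_eq_norm, ← intervalIntegral.integral_sub (hint x hx) (hint x₀ (mem_of_mem_nhds hU))]
  refine (intervalIntegral.norm_integral_le_of_norm_le_const fun w hw => ?_).trans_lt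
    ((mul_comm δ _).trans_lt hδe)
  rw [← dist_eq_norm]
  exact (hVδ x hxV w (uIoc_subset_uIcc hw)).le

theorem exists_norm_integral_le_of_continuousAt {s : ℝ}
    (hf : ContinuousAt (Function.uncurry f) (x₀, s)) :
    ∃ M : ℝ≥0, ∃ V ∈ 𝓝 s, ∀ᶠ x in 𝓝 x₀, ∀ u ∈ V, ∀ v ∈ V,
      ‖∫ w in u..v, f x w‖ ≤ M * |v - u| := by
  obtain ⟨U, hU, N, hN, hUN⟩ := mem_nhds_prod_iff.1
    (hf.norm.eventually (eventually_le_nhds (lt_add_one _)))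
  obtain ⟨r, hr, hrN⟩ := Metric.mem_nhds_iff.1 hN
  refine ⟨‖f x₀ s‖₊ + 1, ball s r, ball_mem_nhds s hr, mem_of_superset hU
    fun x hx u hu v hv => intervalIntegral.norm_integral_le_of_norm_le_const fun w hw => ?_⟩
  have hwr : w ∈ ball s r := (convex_ball s r).ordConnected.uIcc_subset hu hv (uIoc_subset_uIcc hw)
  exact hUN (mk_mem_prod hx (hrN hwr))

theorem lipschitzFamilyAt_intervalIntegral {U : Set T} (hU : IsOpen U) {J : Set ℝ} (hJ : IsOpen J)
    (hJc : J.OrdConnected) (hf : ContinuousOn (Function.uncurry f) (U ×ˢ J)) (hx₀ : x₀ ∈ U)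
    {s t : ℝ} (hs : s ∈ J) (ht : t ∈ J) :
    LipschitzFamilyAt (fun x (p : ℝ × ℝ) => ∫ w in p.1..p.2, f x w) x₀ (s, t) := by
  have hint : ∀ x ∈ U, ∀ u ∈ J, ∀ v ∈ J, IntervalIntegrable (f x) volume u v :=
    fun x hx u hu v hv => (hf.comp (f := fun w => (x, w)) (by fun_prop) fun w hw =>
      ⟨hx, hJc.uIcc_subset hu hv hw⟩).intervalIntegrable
  have hfat : ∀ u ∈ J, ContinuousAt (Function.uncurry f) (x₀, u) := fun u hu =>
    hf.continuousAt ((hU.prod hJ).mem_nhds ⟨hx₀, hu⟩)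
  refine .of_continuousAt_left (continuousAt_intervalIntegral_of_continuousOn
    (hf.mono (prod_mono_right (hJc.uIcc_subset hs ht))) (hU.mem_nhds hx₀)) ?_
  obtain ⟨M, V, hV, hM⟩ := exists_norm_integral_le_of_continuousAt (hfat s hs)
  obtain ⟨M', V', hV', hM'⟩ := exists_norm_integral_le_of_continuousAt (hfat t ht)
  refine ⟨M + M', (V ∩ J) ×ˢ (V' ∩ J), prod_mem_nhds (inter_mem hV (hJ.mem_nhds hs))
    (inter_mem hV' (hJ.mem_nhds ht)), ?_⟩
  filter_upwards [hM, hM', hU.mem_nhds hx₀] with x hxM hxM' hx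
  refine LipschitzOnWith.of_dist_le_mul ?_
  rintro ⟨u, v⟩ ⟨⟨huV, hu⟩, hvV, hv⟩ ⟨u', v'⟩ ⟨⟨huV', hu'⟩, hvV', hv'⟩
  calc dist (∫ w in u..v, f x w) (∫ w in u'..v', f x w)
      = ‖(∫ w in u..u', f x w) - ∫ w in v..v', f x w‖ := by
        rw [dist_eq_norm, intervalIntegral.integral_interval_sub_interval_comm
          (hint x hx u hu v hv) (hint x hx u' hu' v' hv') (hint x hx u hu u' hu')]
    _ ≤ M * |u' - u| + M' * |v' - v| :=
        (norm_sub_le _ _).trans (add_le_add (hxM u huV u' huV') (hxM' v hvV v' hvV'))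
    _ ≤ M * dist (u, v) (u', v') + M' * dist (u, v) (u', v') := by
        rw [abs_sub_comm u', abs_sub_comm v']
        gcongr
        exacts [le_max_left _ _, le_max_right _ _]
    _ = (M + M' : ℝ≥0) * dist (u, v) (u', v') := by push_cast; ring

end ParametricIntegral

section Gronwall

theorem gronwallBound_zero_mul (K d x : ℝ) :
    gronwallBound 0 K (K * d) x = d * (Real.exp (K * x) - 1) := by
  rcases eq_or_ne K 0 with rfl | hK
  · simp [gronwallBound_K0]
  · rw [gronwallBound_of_K_ne_0 hK]
    field_simp
    ring

variable {E : Type*} [NormedAddCommGroup E] [NormedSpace ℝ E] {f f' : ℝ → E} {δ K ε a b t₀ : ℝ}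

theorem norm_le_gronwallBound_of_hasDerivWithinAt_Icc
    (hf : ∀ t ∈ Icc a b, HasDerivWithinAt f (f' t) (Icc a b) t)
    (bound : ∀ t ∈ Icc a b, ‖f' t‖ ≤ K * ‖f t‖ + ε) (ht₀ : t₀ ∈ Icc a b) (h₀ : ‖f t₀‖ ≤ δ) :
    ∀ t ∈ Icc a b, ‖f t‖ ≤ gronwallBound δ K ε |t - t₀| := by
  intro t ht
  rcases le_total t₀ t with h | h
  · have hsub : Icc t₀ b ⊆ Icc a b := Icc_subset_Icc_left ht₀.1
    rw [abs_of_nonneg (sub_nonneg.2 h)]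
    refine norm_le_gronwallBound_of_norm_deriv_right_le
      (fun s hs => ((hf s (hsub hs)).mono hsub).continuousWithinAt) (fun s hs => ?_) h₀
      (fun s hs => bound s (hsub (Ico_subset_Icc_self hs))) t ⟨h, ht.2⟩
    have hs' : s ∈ Icc a b := hsub (Ico_subset_Icc_self hs)
    exact (hf s hs').mono_of_mem_nhdsWithin (Icc_mem_nhdsGE_of_mem ⟨hs'.1, hs.2⟩)
  · -- Reflecting time about `t₀` turns the backward estimate into the forward one.
    have hmaps : MapsTo (fun s => 2 * t₀ - s) (Icc t₀ (2 * t₀ - a)) (Icc a b) := fun s hs =>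
      ⟨by linarith [hs.2], by linarith [hs.1, ht₀.2]⟩
    have hderiv : ∀ s ∈ Icc t₀ (2 * t₀ - a), HasDerivWithinAt (fun s => f (2 * t₀ - s))
        (-f' (2 * t₀ - s)) (Icc t₀ (2 * t₀ - a)) s := fun s hs => by
      simpa [Function.comp_def] using (hf _ (hmaps hs)).scomp s
        (((hasDerivAt_id s).const_sub (2 * t₀)).hasDerivWithinAt) hmaps
    have := norm_le_gronwallBound_of_norm_deriv_right_le
      (fun s hs => (hderiv s hs).continuousWithinAt)
      (fun s hs => (hderiv s (Ico_subset_Icc_self hs)).mono_of_mem_nhdsWithin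
        (Icc_mem_nhdsGE_of_mem hs)) (δ := δ) (K := K) (ε := ε) 
      (by rwa [two_mul, add_sub_cancel_right])
      (fun s hs => by simpa using bound _ (hmaps (Ico_subset_Icc_self hs)))
      (2 * t₀ - t) ⟨by linarith, by linarith [ht.1]⟩
    rw [abs_of_nonpos (sub_nonpos.2 h)]
    convert this using 2 <;> ring_nf

theorem max_norm_sub_le_exp_mul {X Y X' Y' : ℝ → E} {d : ℝ}
    (hX : ∀ t ∈ Icc a b, HasDerivWithinAt X (X' t) (Icc a b) t)
    (hY : ∀ t ∈ Icc a b, HasDerivWithinAt Y (Y' t) (Icc a b) t) (hK : 0 ≤ K) (hd : 0 ≤ d)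
    (bound : ∀ t ∈ Icc a b, ‖X' t - Y' t‖ ≤ K * max ‖X t - Y t‖ d)
    (ht₀ : t₀ ∈ Icc a b) (h₀ : X t₀ = Y t₀) :
    ∀ t ∈ Icc a b, max ‖X t - Y t‖ d ≤ Real.exp (K * (b - a)) * d := by
  intro t ht
  have hab : a ≤ b := ht.1.trans ht.2
  have hexp : 1 ≤ Real.exp (K * (b - a)) := Real.one_le_exp (mul_nonneg hK (sub_nonneg.2 hab))
  refine max_le ?_ (le_mul_of_one_le_left hd hexp)
  have hle : |t - t₀| ≤ b - a := abs_sub_le_of_le_of_le ht.1 ht.2 ht₀.1 ht₀.2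
  calc ‖X t - Y t‖ ≤ gronwallBound 0 K (K * d) |t - t₀| := by
        refine norm_le_gronwallBound_of_hasDerivWithinAt_Icc (f := fun t => X t - Y t)
          (fun s hs => (hX s hs).sub (hY s hs)) (fun s hs => (bound s hs).trans ?_) ht₀
          (by simp [h₀]) t ht
        rw [← mul_add]
        gcongr
        exact max_le_add_of_nonneg (norm_nonneg _) hd
    _ = d * (Real.exp (K * |t - t₀|) - 1) := gronwallBound_zero_mul K d _
    _ ≤ d * Real.exp (K * (b - a)) := by
        gcongr
        linarith [Real.exp_le_exp.2 (mul_le_mul_of_nonneg_left hle hK)]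
    _ = Real.exp (K * (b - a)) * d := mul_comm _ _

end Gronwall

section ParameterDependence

variable {E P : Type*} [NormedAddCommGroup E] [NormedSpace ℝ E] [PseudoMetricSpace P]
  {v : ℝ → E × P → E} {K : ℝ≥0} {a b d t₀ : ℝ} {X Y : ℝ → E} {p q : ℝ → P}

theorem dist_le_exp_mul_of_isIntegralCurveOn {s : ℝ → Set (E × P)}
    (hv : ∀ t ∈ Icc a b, LipschitzOnWith K (v t) (s t))
    (hX : IsIntegralCurveOn X (fun t x => v t (x, p t)) (Icc a b))
    (hXs : ∀ t ∈ Icc a b, (X t, p t) ∈ s t)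
    (hY : IsIntegralCurveOn Y (fun t x => v t (x, q t)) (Icc a b))
    (hYs : ∀ t ∈ Icc a b, (Y t, q t) ∈ s t)
    (ht₀ : t₀ ∈ Icc a b) (h₀ : X t₀ = Y t₀) (hpq : ∀ t ∈ Icc a b, dist (p t) (q t) ≤ d) :
    ∀ t ∈ Icc a b, dist (X t, p t) (Y t, q t) ≤ Real.exp (K * (b - a)) * d := by
  intro t ht
  have hd : 0 ≤ d := dist_nonneg.trans (hpq t ht)
  refine (max_le_max (dist_eq_norm _ _).le (hpq t ht)).trans
    (max_norm_sub_le_exp_mul hX hY K.2 hd (fun s hs => ?_) ht₀ h₀ t ht)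
  calc ‖v s (X s, p s) - v s (Y s, q s)‖ ≤ K * dist (X s, p s) (Y s, q s) := by
        rw [← dist_eq_norm]
        exact (hv s hs).dist_le_mul _ (hXs s hs) _ (hYs s hs)
    _ ≤ K * max ‖X s - Y s‖ d :=
        mul_le_mul_of_nonneg_left (max_le_max (dist_eq_norm _ _).le (hpq s hs)) K.2

end ParameterDependence

section RadialRetraction

variable {E : Type*} [NormedAddCommGroup E] [NormedSpace ℝ E]

/-- The radial retraction of a normed space onto its closed ball of radius `r` about `0`,
used to turn a field that is Lipschitz on a tube into a globally Lipschitz one. -/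
noncomputable def radialRetraction (r : ℝ) (x : E) : E := (r / max r ‖x‖) • x

theorem radialRetraction_of_norm_le {r : ℝ} (hr : 0 < r) {x : E} (hx : ‖x‖ ≤ r) :
    radialRetraction r x = x := by
  rw [radialRetraction, max_eq_left hx, div_self hr.ne', one_smul]

theorem norm_radialRetraction_le {r : ℝ} (hr : 0 < r) (x : E) : ‖radialRetraction r x‖ ≤ r := by
  have hm : 0 < max r ‖x‖ := hr.trans_le (le_max_left _ _)
  rw [radialRetraction, norm_smul, Real.norm_of_nonneg (by positivity), div_mul_eq_mul_div,
    div_le_iff₀ hm]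
  gcongr
  exact le_max_right _ _

theorem norm_radialRetraction_le_norm {r : ℝ} (hr : 0 < r) (x : E) :
    ‖radialRetraction r x‖ ≤ ‖x‖ := by
  have hm : 0 < max r ‖x‖ := hr.trans_le (le_max_left _ _)
  rw [radialRetraction, norm_smul, Real.norm_of_nonneg (by positivity)]
  exact mul_le_of_le_one_left (norm_nonneg _) ((div_le_one hm).2 (le_max_left _ _))

theorem lipschitzWith_radialRetraction {r : ℝ} (hr : 0 < r) :
    LipschitzWith 2 (radialRetraction r : E → E) := by
  refine LipschitzWith.of_dist_le_mul fun x y => ?_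
  set m := max r ‖x‖ with hm
  set n := max r ‖y‖ with hn
  have hm0 : 0 < m := hr.trans_le (le_max_left _ _)
  have hn0 : 0 < n := hr.trans_le (le_max_left _ _)
  have hmn : |n - m| ≤ ‖x - y‖ := by
    rw [hm, hn, norm_sub_rev, max_comm r, max_comm r]
    exact (abs_max_sub_max_le_abs _ _ _).trans (abs_norm_sub_norm_le _ _)
  have hsplit : radialRetraction r x - radialRetraction r y =
      (r / m) • (x - y) + (r / m * ((n - m) / n)) • y := by
    rw [radialRetraction, radialRetraction, ← hm, ← hn, smul_sub, sub_add, ← sub_smul]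
    congr 2
    field_simp
    ring
  have hrm : r / m ≤ 1 := (div_le_one hm0).2 (le_max_left _ _)
  have hyn : ‖y‖ / n ≤ 1 := (div_le_one hn0).2 (le_max_right _ _)
  calc dist (radialRetraction r x) (radialRetraction r y)
      ≤ r / m * ‖x - y‖ + r / m * (|n - m| * (‖y‖ / n)) := by
        rw [dist_eq_norm, hsplit]
        refine (norm_add_le _ _).trans_eq ?_
        simp only [norm_smul, norm_mul, norm_div, Real.norm_eq_abs, abs_of_pos hr, abs_of_pos hm0,
          abs_of_pos hn0]
        ring
    _ ≤ 1 * ‖x - y‖ + 1 * (‖x - y‖ * 1) := by gcongr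
    _ = (2 : ℝ≥0) * dist x y := by rw [dist_eq_norm]; push_cast; ring

end RadialRetraction

section ExistenceInTube

theorem exists_isIntegralCurveOn_Icc_of_lipschitzWith_of_bounded {E : Type*}
    [NormedAddCommGroup E] [NormedSpace ℝ E] [CompleteSpace E] {f : ℝ → E → E} {K : ℝ≥0}
    {L a b t₀ : ℝ} (hK : ∀ t ∈ Icc a b, LipschitzWith K (f t))
    (hf : ∀ x, ContinuousOn (f · x) (Icc a b)) (hL : ∀ t ∈ Icc a b, ∀ x, ‖f t x‖ ≤ L)
    (ht₀ : t₀ ∈ Icc a b) (x₀ : E) : ∃ X, X t₀ = x₀ ∧ IsIntegralCurveOn X f (Icc a b) := by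
  have hab : 0 ≤ max (b - t₀) (t₀ - a) := le_max_of_le_left (sub_nonneg.2 ht₀.2)
  have hL0 : 0 ≤ L := (norm_nonneg _).trans (hL t₀ ht₀ x₀)
  have hPL : IsPicardLindelof f (⟨t₀, ht₀⟩ : Icc a b) x₀ ⟨_, mul_nonneg hL0 hab⟩ 0 ⟨L, hL0⟩ K :=
    { lipschitzOnWith := fun t ht => (hK t ht).lipschitzOnWith
      continuousOn := fun x _ => hf x
      norm_le := fun t ht x _ => hL t ht x
      mul_max_le := (sub_zero _).ge }
  exact hPL.exists_eq_forall_mem_Icc_hasDerivWithinAt₀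

variable {E P : Type*} [NormedAddCommGroup E] [NormedSpace ℝ E] [CompleteSpace E]
  [PseudoMetricSpace P] {v : ℝ → E × P → E} {K : ℝ≥0} {a b r t₀ : ℝ}
  {X₀ : ℝ → E} {p₀ q : ℝ → P}

theorem exists_isIntegralCurveOn_radialRetraction (hr : 0 < r)
    (hv : ∀ t ∈ Icc a b, LipschitzOnWith K (v t) (closedBall (X₀ t, p₀ t) r))
    (hvc : ContinuousOn (Function.uncurry v)
      {z | z.1 ∈ Icc a b ∧ z.2 ∈ closedBall (X₀ z.1, p₀ z.1) r})
    (hX₀ : ContinuousOn X₀ (Icc a b)) (hq : ContinuousOn q (Icc a b))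
    (hqr : ∀ t ∈ Icc a b, dist (q t) (p₀ t) ≤ r) (ht₀ : t₀ ∈ Icc a b) (x₀ : E) :
    ∃ X, X t₀ = x₀ ∧ IsIntegralCurveOn X
      (fun t x => v t (X₀ t + radialRetraction r (x - X₀ t), q t)) (Icc a b) := by
  have hmem : ∀ t ∈ Icc a b, ∀ x,
      (X₀ t + radialRetraction r (x - X₀ t), q t) ∈ closedBall (X₀ t, p₀ t) r := fun t ht x =>
    max_le (by simpa using norm_radialRetraction_le hr (x - X₀ t)) (hqr t ht)
  have hcont : ∀ x, ContinuousOn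
      (fun t => v t (X₀ t + radialRetraction r (x - X₀ t), q t)) (Icc a b) := fun x =>
    hvc.comp (f := fun t => (t, X₀ t + radialRetraction r (x - X₀ t), q t))
      (continuousOn_id.prodMk ((hX₀.add
        ((lipschitzWith_radialRetraction hr).continuous.comp_continuousOn
          (continuousOn_const.sub hX₀))).prodMk hq)) fun t ht => ⟨ht, hmem t ht x⟩
  have hlip : ∀ t ∈ Icc a b, LipschitzWith (K * 2)
      (fun x => v t (X₀ t + radialRetraction r (x - X₀ t), q t)) := fun t ht => by
    refine LipschitzWith.of_dist_le_mul fun x y => ((hv t ht).dist_le_mul _ (hmem t ht x) _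
      (hmem t ht y)).trans ?_
    have := (lipschitzWith_radialRetraction hr).dist_le_mul (x - X₀ t) (y - X₀ t)
    rw [dist_sub_right] at this
    rw [dist_prod_same_right, dist_add_left, NNReal.coe_mul, mul_assoc]
    gcongr
  obtain ⟨M, hM⟩ := isCompact_Icc.exists_bound_of_continuousOn (hcont 0)
  have hbound : ∀ t ∈ Icc a b, ∀ x, ‖v t (X₀ t + radialRetraction r (x - X₀ t), q t)‖ ≤
      M + K * (r + r) := fun t ht x => by
    have hdist := (hv t ht).dist_le_mul _ (hmem t ht x) _ (hmem t ht 0)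
    rw [dist_eq_norm] at hdist
    refine (norm_le_norm_add_norm_sub' _ _).trans (add_le_add (hM t ht) (hdist.trans ?_))
    gcongr
    exact (dist_triangle_right _ _ _).trans (add_le_add (hmem t ht x) (hmem t ht 0))
  exact exists_isIntegralCurveOn_Icc_of_lipschitzWith_of_bounded hlip hcont hbound ht₀ x₀

theorem exists_isIntegralCurveOn_mem_closedBall (hr : 0 < r)
    (hv : ∀ t ∈ Icc a b, LipschitzOnWith K (v t) (closedBall (X₀ t, p₀ t) r))
    (hvc : ContinuousOn (Function.uncurry v)
      {z | z.1 ∈ Icc a b ∧ z.2 ∈ closedBall (X₀ z.1, p₀ z.1) r})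
    (hX₀ : IsIntegralCurveOn X₀ (fun t x => v t (x, p₀ t)) (Icc a b))
    (hq : ContinuousOn q (Icc a b)) (ht₀ : t₀ ∈ Icc a b) {d : ℝ}
    (hqd : ∀ t ∈ Icc a b, dist (q t) (p₀ t) ≤ d) (hdr : Real.exp (K * (b - a)) * d ≤ r) :
    ∃ X, X t₀ = X₀ t₀ ∧ IsIntegralCurveOn X (fun t x => v t (x, q t)) (Icc a b) ∧
      ∀ t ∈ Icc a b, (X t, q t) ∈ closedBall (X₀ t, p₀ t) r := by
  have hd : 0 ≤ d := dist_nonneg.trans (hqd t₀ ht₀)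
  have hdr' : d ≤ r := (le_mul_of_one_le_left hd (Real.one_le_exp (mul_nonneg K.2
    (sub_nonneg.2 (ht₀.1.trans ht₀.2))))).trans hdr
  have hqr : ∀ t ∈ Icc a b, dist (q t) (p₀ t) ≤ r := fun t ht => (hqd t ht).trans hdr'
  obtain ⟨X, hXt₀, hX⟩ := exists_isIntegralCurveOn_radialRetraction hr hv hvc hX₀.continuousOn hq
    hqr ht₀ (X₀ t₀)
  have hmem : ∀ t ∈ Icc a b, (X₀ t + radialRetraction r (X t - X₀ t), q t) ∈
      closedBall (X₀ t, p₀ t) r := fun t ht =>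
    max_le (by simpa using norm_radialRetraction_le hr (X t - X₀ t)) (hqr t ht)
  have hXX₀ : ∀ t ∈ Icc a b, ‖X t - X₀ t‖ ≤ r := by
    intro t ht
    refine ((le_max_left _ _).trans (max_norm_sub_le_exp_mul hX hX₀ K.2 hd (fun s hs => ?_) ht₀
      hXt₀ t ht)).trans hdr
    rw [← dist_eq_norm]
    refine ((hv s hs).dist_le_mul _ (hmem s hs) _ (mem_closedBall_self hr.le)).trans ?_
    refine mul_le_mul_of_nonneg_left (max_le_max ?_ (hqd s hs)) K.2
    simpa using norm_radialRetraction_le_norm hr (X s - X₀ s)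
  have hX' : ∀ t ∈ Icc a b, X₀ t + radialRetraction r (X t - X₀ t) = X t := fun t ht => by
    rw [radialRetraction_of_norm_le hr (hXX₀ t ht), add_sub_cancel]
  refine ⟨X, hXt₀, fun t ht => ?_, fun t ht => max_le ?_ (hqr t ht)⟩
  · simpa only [hX' t ht] using hX t ht
  · rw [dist_eq_norm]
    exact hXX₀ t ht

end ExistenceInTube

section Extension

variable {E : Type*} [NormedAddCommGroup E] [NormedSpace ℝ E] {a b : ℝ}

theorem exists_forall_hasDerivAt_eqOn_Icc [CompleteSpace E] {f g : ℝ → E} (hg : Continuous g)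
    (hf : ∀ t ∈ Icc a b, HasDerivWithinAt f (g t) (Icc a b) t) :
    ∃ F : ℝ → E, (∀ t, HasDerivAt F (g t) t) ∧ EqOn F f (Icc a b) := by
  have hF : ∀ t, HasDerivAt (fun t => f a + ∫ s in a..t, g s) (g t) t := fun t =>
    (hg.integral_hasStrictDerivAt a t).hasDerivAt.const_add (f a)
  refine ⟨_, hF, eq_of_has_deriv_right_eq (fun t _ => (hF t).hasDerivWithinAt)
    (fun t ht => (hf t (Ico_subset_Icc_self ht)).mono_of_mem_nhdsWithin
      (Icc_mem_nhdsGE_of_mem ht))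
    (fun t _ => (hF t).continuousAt.continuousWithinAt)
    (fun t ht => (hf t ht).continuousWithinAt) (by simp)⟩

theorem exists_contDiff_two_of_hasDerivWithinAt_Icc {x y z : ℝ → ℝ} (hab : a ≤ b)
    (hx : ∀ t ∈ Icc a b, HasDerivWithinAt x (y t) (Icc a b) t)
    (hy : ∀ t ∈ Icc a b, HasDerivWithinAt y (z t) (Icc a b) t) (hz : ContinuousOn z (Icc a b)) :
    ∃ h : ℝ → ℝ, ContDiff ℝ 2 h ∧ EqOn h x (Icc a b) ∧ EqOn (deriv h) y (Icc a b) ∧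
      EqOn (deriv (deriv h)) z (Icc a b) := by
  have hext : ∀ t ∈ Icc a b, IccExtend hab ((Icc a b).domRestrict z) t = z t := fun t ht =>
    IccExtend_of_mem hab _ ht
  have hcont : Continuous (IccExtend hab ((Icc a b).domRestrict z)) :=
    continuous_IccExtend_iff.2 hz.domRestrict
  obtain ⟨V, hV, hVy⟩ := exists_forall_hasDerivAt_eqOn_Icc hcont fun t ht => by
    rw [hext t ht]
    exact hy t ht
  obtain ⟨H, hH, hHx⟩ := exists_forall_hasDerivAt_eqOn_Icc
    (continuous_iff_continuousAt.2 fun t => (hV t).continuousAt) fun t ht => by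
    rw [hVy ht]
    exact hx t ht
  obtain rfl : deriv H = V := funext fun t => (hH t).deriv
  have hHH : deriv (deriv H) = IccExtend hab ((Icc a b).domRestrict z) :=
    funext fun t => (hV t).deriv
  have hV1 : ContDiff ℝ 1 (deriv H) :=
    contDiff_one_iff_deriv.2 ⟨fun t => (hV t).differentiableAt, hHH ▸ hcont⟩
  refine ⟨H, ?_, hHx, hVy, fun t ht => by rw [hHH, hext t ht]⟩
  exact contDiff_succ_iff_deriv (n := 1).2 ⟨fun t => (hH t).differentiableAt, by simp, hV1⟩

end Extension

section SecondOrder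

/-- The pointwise `C²` distance between two functions. -/
noncomputable def c2Dist (h k : ℝ → ℝ) (θ : ℝ) : ℝ :=
  |h θ - k θ| + |deriv h θ - deriv k θ| + |deriv (deriv h) θ - deriv (deriv k) θ|

/-- The 1-jet of a function, as a curve in phase space. -/
noncomputable def oneJet (h : ℝ → ℝ) (θ : ℝ) : ℝ × ℝ := (h θ, deriv h θ)

/-- The field of the first-order system equivalent to `h'' = G θ ((h, h'), p)`. -/
def firstOrderField (G : ℝ → (ℝ × ℝ) × ℝ → ℝ) (θ : ℝ) (z : (ℝ × ℝ) × ℝ) : ℝ × ℝ :=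
  (z.1.2, G θ z)

/-- `h` is a `C²` solution on `I` of `h'' = G θ ((h, h'), p)` with 1-jet `x₀` at `θ₀`, and
`((h, h'), p)` stays in the tube `B`. -/
structure IsTubeSolution (G : ℝ → (ℝ × ℝ) × ℝ → ℝ) (B : ℝ → Set ((ℝ × ℝ) × ℝ)) (I : Set ℝ)
    (θ₀ : ℝ) (x₀ : ℝ × ℝ) (p h : ℝ → ℝ) : Prop where
  contDiff : ContDiff ℝ 2 h
  oneJet_eq : oneJet h θ₀ = x₀
  mem_tube : ∀ θ ∈ I, (oneJet h θ, p θ) ∈ B θ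
  deriv_deriv_eq : ∀ θ ∈ I, deriv (deriv h) θ = G θ (oneJet h θ, p θ)

variable {G : ℝ → (ℝ × ℝ) × ℝ → ℝ} {B : ℝ → Set ((ℝ × ℝ) × ℝ)} {K : ℝ≥0} {I : Set ℝ}
  {a b d r θ₀ : ℝ} {x₀ : ℝ × ℝ} {p q p₀ h k γ : ℝ → ℝ}

theorem hasDerivAt_oneJet (hh : ContDiff ℝ 2 h) (θ : ℝ) :
    HasDerivAt (oneJet h) (deriv h θ, deriv (deriv h) θ) θ :=
  (hh.differentiable two_ne_zero θ).hasDerivAt.prodMk (hh.differentiable_deriv_two θ).hasDerivAt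

theorem isIntegralCurveOn_oneJet (hh : ContDiff ℝ 2 h)
    (heq : ∀ θ ∈ I, deriv (deriv h) θ = G θ (oneJet h θ, p θ)) :
    IsIntegralCurveOn (oneJet h) (fun θ x => firstOrderField G θ (x, p θ)) I := fun θ hθ => by
  have := (hasDerivAt_oneJet hh θ).hasDerivWithinAt (s := I)
  rwa [heq θ hθ] at this

theorem exists_contDiff_two_of_isIntegralCurveOn {X : ℝ → ℝ × ℝ} (hab : a ≤ b)
    (hX : IsIntegralCurveOn X (fun θ x => firstOrderField G θ (x, p θ)) (Icc a b))
    (hG : ContinuousOn (fun θ => G θ (X θ, p θ)) (Icc a b)) :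
    ∃ h, ContDiff ℝ 2 h ∧ EqOn (oneJet h) X (Icc a b) ∧
      ∀ θ ∈ Icc a b, deriv (deriv h) θ = G θ (oneJet h θ, p θ) := by
  obtain ⟨h, hh, hx, hy, hz⟩ := exists_contDiff_two_of_hasDerivWithinAt_Icc hab
    (fun θ hθ => (hX θ hθ).fst) (fun θ hθ => (hX θ hθ).snd) hG
  have hjet : EqOn (oneJet h) X (Icc a b) := fun θ hθ => Prod.ext (hx hθ) (hy hθ)
  exact ⟨h, hh, hjet, fun θ hθ => by rw [hjet hθ]; exact hz hθ⟩

theorem dist_oneJet_le_c2Dist (h k : ℝ → ℝ) (θ : ℝ) :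
    dist (oneJet h θ) (oneJet k θ) ≤ c2Dist h k θ := by
  have h₀ := abs_nonneg (h θ - k θ)
  have h₁ := abs_nonneg (deriv h θ - deriv k θ)
  have h₂ := abs_nonneg (deriv (deriv h) θ - deriv (deriv k) θ)
  exact max_le (by rw [Real.dist_eq]; unfold c2Dist oneJet; linarith)
    (by rw [Real.dist_eq]; unfold c2Dist oneJet; linarith)

theorem IsTubeSolution.c2Dist_le
    (hG : ∀ θ ∈ Icc a b, LipschitzOnWith K (firstOrderField G θ) (B θ))
    (hh : IsTubeSolution G B (Icc a b) θ₀ x₀ p h) (hk : IsTubeSolution G B (Icc a b) θ₀ x₀ q k)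
    (hθ₀ : θ₀ ∈ Icc a b) (hpq : ∀ θ ∈ Icc a b, |p θ - q θ| ≤ d) :
    ∀ θ ∈ Icc a b, c2Dist h k θ ≤ (2 + K) * Real.exp (K * (b - a)) * d := by
  intro θ hθ
  have hdist := dist_le_exp_mul_of_isIntegralCurveOn hG
    (isIntegralCurveOn_oneJet hh.contDiff hh.deriv_deriv_eq) hh.mem_tube
    (isIntegralCurveOn_oneJet hk.contDiff hk.deriv_deriv_eq) hk.mem_tube hθ₀
    (hh.oneJet_eq.trans hk.oneJet_eq.symm) hpq θ hθ
  set D := dist (oneJet h θ, p θ) (oneJet k θ, q θ)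
  have hjet : dist (oneJet h θ) (oneJet k θ) ≤ D := le_max_left _ _
  have h₀ : |h θ - k θ| ≤ D := (le_max_left _ _).trans hjet
  have h₁ : |deriv h θ - deriv k θ| ≤ D := (le_max_right _ _).trans hjet
  have h₂ : |deriv (deriv h) θ - deriv (deriv k) θ| ≤ K * D := by
    rw [hh.deriv_deriv_eq θ hθ, hk.deriv_deriv_eq θ hθ]
    exact (le_max_right _ _).trans
      ((hG θ hθ).dist_le_mul _ (hh.mem_tube θ hθ) _ (hk.mem_tube θ hθ))
  calc c2Dist h k θ ≤ D + D + K * D := add_le_add (add_le_add h₀ h₁) h₂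
    _ = (2 + K) * D := by ring
    _ ≤ (2 + K) * (Real.exp (K * (b - a)) * d) := by gcongr
    _ = (2 + K) * Real.exp (K * (b - a)) * d := by ring

theorem exists_isTubeSolution (hr : 0 < r)
    (hG : ∀ θ ∈ Icc a b, LipschitzOnWith K (firstOrderField G θ)
      (closedBall (oneJet γ θ, p₀ θ) r))
    (hGc : ContinuousOn (Function.uncurry G)
      {w | w.1 ∈ Icc a b ∧ w.2 ∈ closedBall (oneJet γ w.1, p₀ w.1) r})
    (hγ : ContDiff ℝ 2 γ) (hγeq : ∀ θ ∈ Icc a b, deriv (deriv γ) θ = G θ (oneJet γ θ, p₀ θ))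
    (hp : ContinuousOn p (Icc a b)) (hθ₀ : θ₀ ∈ Icc a b)
    (hpd : ∀ θ ∈ Icc a b, |p θ - p₀ θ| ≤ d) (hdr : Real.exp (K * (b - a)) * d ≤ r) :
    ∃ h, IsTubeSolution G (fun θ => closedBall (oneJet γ θ, p₀ θ) r) (Icc a b) θ₀
      (oneJet γ θ₀) p h := by
  have hvc : ContinuousOn (Function.uncurry (firstOrderField G))
      {w | w.1 ∈ Icc a b ∧ w.2 ∈ closedBall (oneJet γ w.1, p₀ w.1) r} :=
    (by fun_prop : Continuous fun w : ℝ × (ℝ × ℝ) × ℝ => w.2.1.2).continuousOn.prodMk hGc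
  obtain ⟨X, hX₀, hX, hXr⟩ := exists_isIntegralCurveOn_mem_closedBall hr hG hvc
    (isIntegralCurveOn_oneJet hγ hγeq) hp hθ₀ hpd hdr
  obtain ⟨h, hh, hjet, heq⟩ := exists_contDiff_two_of_isIntegralCurveOn (hθ₀.1.trans hθ₀.2) hX
    (hGc.comp (f := fun θ => (θ, X θ, p θ)) (continuousOn_id.prodMk (hX.continuousOn.prodMk hp))
      fun θ hθ => ⟨hθ, hXr θ hθ⟩)
  exact ⟨h, hh, (hjet hθ₀).trans hX₀, fun θ hθ => hjet hθ ▸ hXr θ hθ, heq⟩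

/-- Local well-posedness at `(γ, p₀)` of the problem `𝓔 h p = 0` on `I` with the 1-jet of `h` at
`θ₀` prescribed by `γ`: in a `C²` neighbourhood of `γ` there is exactly one solution `S p` for each
parameter `p` uniformly close to `p₀`, and `S` is continuous from the uniform to the `C²`
distance. -/
def LocallyWellPosed (I : Set ℝ) (θ₀ : ℝ) (𝓔 : (ℝ → ℝ) → (ℝ → ℝ) → ℝ → ℝ) (γ p₀ : ℝ → ℝ) :
    Prop :=
  ∃ δ > (0 : ℝ), ∃ η > (0 : ℝ), ∃ S : (ℝ → ℝ) → (ℝ → ℝ),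
    (∀ p : ℝ → ℝ, ContinuousOn p I → (∀ θ ∈ I, |p θ - p₀ θ| < δ) →
      (ContDiff ℝ 2 (S p) ∧ S p θ₀ = γ θ₀ ∧ deriv (S p) θ₀ = deriv γ θ₀ ∧
        (∀ θ ∈ I, c2Dist (S p) γ θ < η) ∧ (∀ θ ∈ I, 𝓔 (S p) p θ = 0) ∧
        (∀ h : ℝ → ℝ, ContDiff ℝ 2 h → h θ₀ = γ θ₀ → deriv h θ₀ = deriv γ θ₀ →
          (∀ θ ∈ I, c2Dist h γ θ < η) → (∀ θ ∈ I, 𝓔 h p θ = 0) → EqOn h (S p) I))) ∧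
    EqOn (S p₀) γ I ∧
    (∀ p : ℝ → ℝ, ContinuousOn p I → (∀ θ ∈ I, |p θ - p₀ θ| < δ) →
      ∀ e > (0 : ℝ), ∃ d > (0 : ℝ), ∀ q : ℝ → ℝ, ContinuousOn q I →
        (∀ θ ∈ I, |q θ - p₀ θ| < δ) → (∀ θ ∈ I, |q θ - p θ| < d) →
        ∀ θ ∈ I, c2Dist (S q) (S p) θ < e)

theorem locallyWellPosed_of_lipschitz_dependence {Sol : (ℝ → ℝ) → (ℝ → ℝ) → Prop}
    {𝓔 : (ℝ → ℝ) → (ℝ → ℝ) → ℝ → ℝ} {C δ : ℝ} (hC : 0 < C) (hδ : 0 < δ) (hr : 0 < r)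
    (hsol : ∀ p h, Sol p h → ContDiff ℝ 2 h ∧ oneJet h θ₀ = oneJet γ θ₀ ∧ ∀ θ ∈ I, 𝓔 h p θ = 0)
    (hof : ∀ p h, (∀ θ ∈ I, |p θ - p₀ θ| < δ) → ContDiff ℝ 2 h → oneJet h θ₀ = oneJet γ θ₀ →
      (∀ θ ∈ I, c2Dist h γ θ < r) → (∀ θ ∈ I, 𝓔 h p θ = 0) → Sol p h)
    (hdist : ∀ p q h k d, Sol p h → Sol q k → (∀ θ ∈ I, |p θ - q θ| ≤ d) →
      ∀ θ ∈ I, c2Dist h k θ ≤ C * d)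
    (hex : ∀ p, ContinuousOn p I → (∀ θ ∈ I, |p θ - p₀ θ| < δ) → ∃ h, Sol p h)
    (hp₀ : ContinuousOn p₀ I) (hγ : Sol p₀ γ) : LocallyWellPosed I θ₀ 𝓔 γ p₀ := by
  have hhalf : ∀ {e : ℝ}, 0 < e → C * (e / (2 * C)) < e := fun he => by
    rw [← div_div, mul_div_cancel₀ _ hC.ne']
    exact half_lt_self he
  have huniq : ∀ {p h k}, Sol p h → Sol p k → EqOn h k I := fun hh hk θ hθ => by
    have hle := hdist _ _ _ _ 0 hh hk (by simp) θ hθ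
    rw [mul_zero] at hle
    exact congrArg Prod.fst (dist_le_zero.1 ((dist_oneJet_le_c2Dist _ _ θ).trans hle))
  choose! S hS using hex
  set δ' := min δ (r / (2 * C))
  have hδ' : 0 < δ' := lt_min hδ (by positivity)
  have hlt : ∀ {p : ℝ → ℝ}, (∀ θ ∈ I, |p θ - p₀ θ| < δ') → ∀ θ ∈ I, |p θ - p₀ θ| < δ :=
    fun hp θ hθ => (hp θ hθ).trans_le (min_le_left _ _)
  refine ⟨δ', hδ', r, hr, S, fun p hp hpδ => ?_,
    huniq (hS p₀ hp₀ (by simpa using fun _ _ => hδ)) hγ,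
    fun p hp hpδ e he => ⟨e / (2 * C), by positivity, fun q hq hqδ hqp θ hθ => ?_⟩⟩
  · have hSp : Sol p (S p) := hS p hp (hlt hpδ)
    obtain ⟨hcont, hjet, h𝓔⟩ := hsol p _ hSp
    refine ⟨hcont, congrArg Prod.fst hjet, congrArg Prod.snd hjet, fun θ hθ => ?_, h𝓔,
      fun h hh h₀ h₁ hclose hh𝓔 => huniq (hof p h (hlt hpδ) hh (Prod.ext h₀ h₁) hclose hh𝓔) hSp⟩
    exact (hdist p p₀ _ _ _ hSp hγ (fun s hs => ((hpδ s hs).trans_le (min_le_right _ _)).le)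
      θ hθ).trans_lt (hhalf hr)
  · exact (hdist q p _ _ _ (hS q hq (hlt hqδ)) (hS p hp (hlt hpδ)) (fun s hs => (hqp s hs).le)
      θ hθ).trans_lt (hhalf he)

theorem locallyWellPosed_of_lipschitzOnWith_closedBall {𝓔 : (ℝ → ℝ) → (ℝ → ℝ) → ℝ → ℝ}
    (hr : 0 < r)
    (hG : ∀ θ ∈ Icc a b, LipschitzOnWith K (firstOrderField G θ)
      (closedBall (oneJet γ θ, p₀ θ) r))
    (hGc : ContinuousOn (Function.uncurry G)
      {w | w.1 ∈ Icc a b ∧ w.2 ∈ closedBall (oneJet γ w.1, p₀ w.1) r})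
    (h𝓔 : ∀ h p : ℝ → ℝ, ∀ θ ∈ Icc a b, (oneJet h θ, p θ) ∈ closedBall (oneJet γ θ, p₀ θ) r →
      (𝓔 h p θ = 0 ↔ deriv (deriv h) θ = G θ (oneJet h θ, p θ)))
    (hγ : ContDiff ℝ 2 γ) (hp₀ : ContinuousOn p₀ (Icc a b)) (hγ𝓔 : ∀ θ ∈ Icc a b, 𝓔 γ p₀ θ = 0)
    (hθ₀ : θ₀ ∈ Icc a b) : LocallyWellPosed (Icc a b) θ₀ 𝓔 γ p₀ := by
  set E := Real.exp (K * (b - a))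
  have hE : 1 ≤ E := Real.one_le_exp (mul_nonneg K.2 (sub_nonneg.2 (hθ₀.1.trans hθ₀.2)))
  have hE₀ : 0 < E := Real.exp_pos _
  have hγsol : IsTubeSolution G (fun θ => closedBall (oneJet γ θ, p₀ θ) r) (Icc a b) θ₀
      (oneJet γ θ₀) p₀ γ :=
    ⟨hγ, rfl, fun θ _ => mem_closedBall_self hr.le, fun θ hθ =>
      (h𝓔 γ p₀ θ hθ (mem_closedBall_self hr.le)).1 (hγ𝓔 θ hθ)⟩
  refine locallyWellPosed_of_lipschitz_dependence (C := (2 + K) * E) (δ := r / E)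
    (by positivity) (by positivity) hr
    (Sol := IsTubeSolution G (fun θ => closedBall (oneJet γ θ, p₀ θ) r) (Icc a b) θ₀ (oneJet γ θ₀))
    (fun p h hh => ⟨hh.contDiff, hh.oneJet_eq, fun θ hθ =>
      (h𝓔 h p θ hθ (hh.mem_tube θ hθ)).2 (hh.deriv_deriv_eq θ hθ)⟩)
    (fun p h hp hh hjet hclose hh𝓔 => ?_)
    (fun p q h k d hh hk hpq => hh.c2Dist_le hG hk hθ₀ hpq)
    (fun p hp hpδ => exists_isTubeSolution hr hG hGc hγ hγsol.deriv_deriv_eq hp hθ₀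
      (fun θ hθ => (hpδ θ hθ).le) (mul_div_cancel₀ _ hE₀.ne').le) hp₀ hγsol
  have hmem : ∀ θ ∈ Icc a b, (oneJet h θ, p θ) ∈ closedBall (oneJet γ θ, p₀ θ) r := fun θ hθ =>
    max_le ((dist_oneJet_le_c2Dist h γ θ).trans (hclose θ hθ).le)
      ((hp θ hθ).le.trans (div_le_self hr.le hE))
  exact ⟨hh, hjet, hmem, fun θ hθ => (h𝓔 h p θ hθ (hmem θ hθ)).1 (hh𝓔 θ hθ)⟩

theorem locallyWellPosed_of_lipschitzFamilyAt {𝓔 : (ℝ → ℝ) → (ℝ → ℝ) → ℝ → ℝ}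
    {Ω : Set ((ℝ × ℝ) × ℝ)} (hΩ : IsOpen Ω)
    (hG : ∀ θ ∈ Icc a b, ∀ z ∈ Ω, LipschitzFamilyAt G θ z)
    (h𝓔 : ∀ h p : ℝ → ℝ, ∀ θ ∈ Icc a b, (oneJet h θ, p θ) ∈ Ω →
      (𝓔 h p θ = 0 ↔ deriv (deriv h) θ = G θ (oneJet h θ, p θ)))
    (hγ : ContDiff ℝ 2 γ) (hp₀ : ContinuousOn p₀ (Icc a b))
    (hγΩ : ∀ θ ∈ Icc a b, (oneJet γ θ, p₀ θ) ∈ Ω) (hγ𝓔 : ∀ θ ∈ Icc a b, 𝓔 γ p₀ θ = 0)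
    (hθ₀ : θ₀ ∈ Icc a b) : LocallyWellPosed (Icc a b) θ₀ 𝓔 γ p₀ := by
  have hjet : Continuous (oneJet γ) :=
    continuous_iff_continuousAt.2 fun θ => (hasDerivAt_oneJet hγ θ).continuousAt
  have hfield : ∀ θ ∈ Icc a b, LipschitzFamilyAt (firstOrderField G) θ (oneJet γ θ, p₀ θ) :=
    fun θ hθ => .prodMk (.of_contDiffAt (by unfold Function.uncurry; fun_prop))
      (hG θ hθ _ (hγΩ θ hθ))
  obtain ⟨r, hr, K, hK⟩ := exists_closedBall_subset_lipschitzOnWith isCompact_Icc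
    (hjet.continuousOn.prodMk hp₀) hΩ hγΩ hfield
  refine locallyWellPosed_of_lipschitzOnWith_closedBall hr (fun θ hθ => (hK θ hθ).2) ?_
    (fun h p θ hθ hmem => h𝓔 h p θ hθ ((hK θ hθ).1 hmem)) hγ hp₀ hγ𝓔 hθ₀
  rintro ⟨θ, z⟩ ⟨hθ, hz⟩
  exact (hG θ hθ z ((hK θ hθ).1 hz)).continuousAt.continuousWithinAt

end SecondOrder

section Characteristics

theorem thetaBar_mem_Ioo (s : ℝ) : thetaBar s ∈ Ioo 0 Real.pi := by
  have hexp : 0 < Real.exp (2 * s) := Real.exp_pos _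
  have hden : 0 < 1 + Real.exp (2 * s) := by positivity
  refine ⟨Real.arccos_pos.2 ((div_lt_one hden).2 (by linarith)), ?_⟩
  refine (Real.arccos_le_pi _).lt_of_ne fun h => ?_
  rw [Real.arccos_eq_pi, div_le_iff₀ hden] at h
  linarith

theorem continuous_thetaBar : Continuous thetaBar :=
  Real.continuous_arccos.comp (Continuous.div (by fun_prop) (by fun_prop) fun _ => by positivity)

theorem continuousAt_fChar {θ : ℝ} (hθ : θ ∈ Ioo 0 Real.pi) : ContinuousAt fChar θ := by
  have hcos_lt : Real.cos θ < 1 := by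
    simpa using Real.cos_lt_cos_of_nonneg_of_le_pi le_rfl hθ.2.le hθ.1
  have hlt_cos : -1 < Real.cos θ := by
    simpa using Real.cos_lt_cos_of_nonneg_of_le_pi hθ.1.le le_rfl hθ.2
  have hden : 1 + Real.cos θ ≠ 0 := by linarith
  refine continuousAt_const.mul (ContinuousAt.log (ContinuousAt.div ?_ ?_ hden)
    (div_ne_zero (by linarith) hden)) <;> fun_prop

theorem continuousOn_partialDeriv_snd {f f' : ℝ → ℝ → ℝ} {U V : Set ℝ} (hU : IsOpen U)
    (hV : IsOpen V) (hf : ContDiffOn ℝ 1 (Function.uncurry f) (U ×ˢ V))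
    (hf' : ∀ x ∈ U, ∀ y ∈ V, HasDerivAt (f x) (f' x y) y) :
    ContinuousOn (Function.uncurry f') (U ×ˢ V) := by
  have hUV : IsOpen (U ×ˢ V) := hU.prod hV
  refine ((hf.continuousOn_fderiv_of_isOpen hUV le_rfl).clm_apply
    (continuousOn_const (c := ((0 : ℝ), (1 : ℝ))))).congr ?_
  rintro ⟨x, y⟩ hxy
  have hdiff : DifferentiableAt ℝ (Function.uncurry f) (x, y) :=
    (hf.differentiableOn one_ne_zero).differentiableAt (hUV.mem_nhds hxy)
  exact (hf' x hxy.1 y hxy.2).unique (hdiff.hasFDerivAt.comp_hasDerivAt y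
    ((hasDerivAt_const y x).prodMk (hasDerivAt_id y)))

theorem continuousOn_calF {ρθ : ℝ → ℝ → ℝ} (g : ℝ)
    (hρθ : ContinuousOn (Function.uncurry ρθ) (Ioi 0 ×ˢ Ioo 0 Real.pi)) :
    ContinuousOn (Function.uncurry (calF g ρθ)) (Ioi 0 ×ˢ Ioo 0 Real.pi) := by
  rintro ⟨ξ, θ⟩ ⟨hξ, hθ⟩
  have hint : ContinuousOn (Function.uncurry fun ξ s : ℝ =>
      g * ρθ (ξ * (Real.exp s + Real.exp (-s)) / 2) (thetaBar s)) (Ioi 0 ×ˢ univ) := by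
    refine continuousOn_const.mul (hρθ.comp (f := fun w : ℝ × ℝ =>
      (w.1 * (Real.exp w.2 + Real.exp (-w.2)) / 2, thetaBar w.2)) ?_ ?_)
    · exact ((by fun_prop : Continuous fun w : ℝ × ℝ =>
        w.1 * (Real.exp w.2 + Real.exp (-w.2)) / 2).prodMk
          (continuous_thetaBar.comp continuous_snd)).continuousOn
    · rintro ⟨x, s⟩ ⟨hx : 0 < x, -⟩
      exact ⟨by simp only [mem_Ioi]; positivity, thetaBar_mem_Ioo s⟩
  have hF := (lipschitzFamilyAt_intervalIntegral isOpen_Ioi isOpen_univ ordConnected_univ hint hξ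
    (mem_univ 0) (mem_univ (fChar θ))).continuousAt
  have hend : ContinuousAt (fun q : ℝ × ℝ => (q.1, (0 : ℝ), fChar q.2)) (ξ, θ) :=
    continuousAt_fst.prodMk (continuousAt_const.prodMk
      (ContinuousAt.comp' (continuousAt_fChar hθ) continuousAt_snd))
  exact (ContinuousAt.comp (x := (ξ, θ)) hF hend).continuousWithinAt

end Characteristics

section BulkPressure

/-- The part of the Bernoulli functional which involves neither the surface pressure nor the
surface tension, as a function of the colatitude `θ` and the surface elevation `u`. -/
noncomputable def bulkPressure (g R Patm a b : ℝ) (ρ ρθ : ℝ → ℝ → ℝ) (F : ℝ → ℝ) (θ u : ℝ) : ℝ :=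
  -(g / Patm) * (∫ s in a..(R * (1 + u)), ρ s θ)
    + (1 / Patm) * (∫ s in (a * Real.sin θ)..(R * (1 + u) * Real.sin θ), (F s / s + calF g ρθ s θ))
    + (b / Patm + (1 / Patm) * ∫ s in (Real.pi / 2)..θ,
        (F (a * Real.sin s) * Real.cot s + calF g ρθ (a * Real.sin s) s * a * Real.cos s))

variable {a R u θ : ℝ} {F : ℝ → ℝ} {Φ : ℝ → ℝ → ℝ}

theorem continuousAt_cot (hθ : Real.sin θ ≠ 0) : ContinuousAt Real.cot θ := by
  simp only [funext Real.cot_eq_cos_div_sin]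
  exact Real.continuous_cos.continuousAt.div Real.continuous_sin.continuousAt hθ

theorem continuousAt_integral_bottom (ha : 0 < a) (hF : ContinuousOn F (Ioi 0))
    (hΦ : ContinuousOn (Function.uncurry Φ) (Ioi 0 ×ˢ Ioo 0 Real.pi)) (hθ : θ ∈ Ioo 0 Real.pi) :
    ContinuousAt (fun θ => ∫ s in (Real.pi / 2)..θ,
      (F (a * Real.sin s) * Real.cot s + Φ (a * Real.sin s) s * a * Real.cos s)) θ := by
  have hpos : MapsTo (fun s => a * Real.sin s) (Ioo 0 Real.pi) (Ioi 0) := fun s hs =>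
    mul_pos ha (Real.sin_pos_of_mem_Ioo hs)
  have hcont : ContinuousOn (fun s =>
      F (a * Real.sin s) * Real.cot s + Φ (a * Real.sin s) s * a * Real.cos s)
      (Ioo 0 Real.pi) := by
    refine ((hF.comp (by fun_prop) hpos).mul fun s hs => (continuousAt_cot
      (Real.sin_pos_of_mem_Ioo hs).ne').continuousWithinAt).add
      (((hΦ.comp (f := fun s => (a * Real.sin s, s)) (by fun_prop)
        fun s hs => ⟨hpos hs, hs⟩).mul continuousOn_const).mul (by fun_prop))
  have hmid : Real.pi / 2 ∈ Ioo 0 Real.pi := ⟨by positivity, half_lt_self Real.pi_pos⟩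
  exact (intervalIntegral.integral_hasDerivAt_right
    (hcont.mono (ordConnected_Ioo.uIcc_subset hmid hθ)).intervalIntegrable
    (hcont.stronglyMeasurableAtFilter isOpen_Ioo θ hθ)
    (hcont.continuousAt (isOpen_Ioo.mem_nhds hθ))).continuousAt

theorem lipschitzFamilyAt_integral_Ioi {f : ℝ → ℝ → ℝ} {p : ℝ → ℝ → ℝ × ℝ}
    (hf : ContinuousOn (Function.uncurry f) (Ioi 0 ×ˢ Ioo 0 Real.pi)) (hθ : θ ∈ Ioo 0 Real.pi)
    (hp : ContDiffAt ℝ 1 (Function.uncurry p) (θ, u)) (hfst : 0 < (p θ u).1)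
    (hsnd : 0 < (p θ u).2) :
    LipschitzFamilyAt (fun θ u => ∫ s in (p θ u).1..(p θ u).2, f s θ) θ u :=
  (lipschitzFamilyAt_intervalIntegral (f := fun θ s => f s θ) isOpen_Ioo isOpen_Ioi ordConnected_Ioi
    (hf.comp continuous_swap.continuousOn fun _ hw => hw.symm) hθ hfst hsnd).comp
    (.of_contDiffAt hp)

theorem lipschitzFamilyAt_bulkPressure {g Patm b : ℝ} {ρ ρθ : ℝ → ℝ → ℝ} (ha : 0 < a) (hR : 0 < R)
    (hρ : ContinuousOn (Function.uncurry ρ) (Ioi 0 ×ˢ Ioo 0 Real.pi))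
    (hρθ : ContinuousOn (Function.uncurry ρθ) (Ioi 0 ×ˢ Ioo 0 Real.pi))
    (hF : ContinuousOn F (Ioi 0)) (hθ : θ ∈ Ioo 0 Real.pi) (hu : 0 < 1 + u) :
    LipschitzFamilyAt (bulkPressure g R Patm a b ρ ρθ F) θ u := by
  have hsin : 0 < Real.sin θ := Real.sin_pos_of_mem_Ioo hθ
  have hcalF := continuousOn_calF g hρθ
  have hFcalF : ContinuousOn (Function.uncurry fun s θ => F s / s + calF g ρθ s θ)
      (Ioi 0 ×ˢ Ioo 0 Real.pi) :=
    ((hF.comp continuousOn_fst fun w hw => hw.1).div continuousOn_fst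
      fun w hw => (ne_of_gt hw.1)).add hcalF
  have hgravity := lipschitzFamilyAt_integral_Ioi (u := u) (p := fun _ u => (a, R * (1 + u))) hρ hθ
    (by unfold Function.uncurry; fun_prop) ha (mul_pos hR hu)
  have hrotation := lipschitzFamilyAt_integral_Ioi (u := u)
    (p := fun θ u => (a * Real.sin θ, R * (1 + u) * Real.sin θ)) hFcalF hθ
    (by unfold Function.uncurry; fun_prop) (mul_pos ha hsin) (mul_pos (mul_pos hR hu) hsin)
  have hbottom : LipschitzFamilyAt (fun θ (_ : ℝ) => ∫ s in (Real.pi / 2)..θ,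
      (F (a * Real.sin s) * Real.cot s + calF g ρθ (a * Real.sin s) s * a * Real.cos s)) θ u :=
    .of_continuousAt (continuousAt_integral_bottom ha hF hcalF hθ)
  exact LipschitzFamilyAt.comp (g := fun _ (w : ℝ × ℝ × ℝ) =>
      -(g / Patm) * w.1 + (1 / Patm) * w.2.1 + (b / Patm + (1 / Patm) * w.2.2))
    (.of_contDiffAt (by unfold Function.uncurry; fun_prop))
    (hgravity.prodMk (hrotation.prodMk hbottom))

end BulkPressure

section SurfaceTension

/-- The value of `h''` at a colatitude `θ` where the surface tension with coefficient `κ` balances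
the net pressure `e`, in terms of `H = 1 + h θ`, `V = h' θ` and `z = cot θ`. -/
noncomputable def surfaceAcceleration (κ H V z e : ℝ) : ℝ :=
  κ⁻¹ * ((H ^ 2 + V ^ 2) ^ ((3:ℝ)/2) / H) * e + (2 * H ^ 2 + 3 * V ^ 2) / H
    - z * V * (H ^ 2 + V ^ 2) / H ^ 2

theorem contDiffAt_surfaceAcceleration {E : Type*} [NormedAddCommGroup E] [NormedSpace ℝ E]
    {n : WithTop ℕ∞} {H V z e : E → ℝ} {x : E} (κ : ℝ) (hH : ContDiffAt ℝ n H x)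
    (hV : ContDiffAt ℝ n V x) (hz : ContDiffAt ℝ n z x) (he : ContDiffAt ℝ n e x)
    (hpos : 0 < H x) :
    ContDiffAt ℝ n (fun x => surfaceAcceleration κ (H x) (V x) (z x) (e x)) x := by
  have hQ : H x ^ 2 + V x ^ 2 ≠ 0 := by positivity
  have hpow : ContDiffAt ℝ n (fun x => (H x ^ 2 + V x ^ 2) ^ ((3:ℝ)/2)) x :=
    ContDiffAt.rpow_const_of_ne (by fun_prop) hQ
  exact .sub (.add (.mul (contDiffAt_const.mul (hpow.div hH hpos.ne')) he)
    (.div (by fun_prop) hH hpos.ne')) (.div (by fun_prop) (hH.pow 2) (pow_pos hpos 2).ne')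

theorem surfaceTension_balance_iff {κ H V z e w : ℝ} (hκ : κ ≠ 0) (hH : 0 < H) :
    -e - κ * ((2 * H ^ 2 + 3 * V ^ 2) / ((H ^ 2 + V ^ 2) ^ ((3:ℝ)/2))
      - w * H / ((H ^ 2 + V ^ 2) ^ ((3:ℝ)/2))
      - z * V / (H * ((H ^ 2 + V ^ 2) ^ ((1:ℝ)/2)))) = 0 ↔
      w = surfaceAcceleration κ H V z e := by
  have hQ : 0 < H ^ 2 + V ^ 2 := by positivity
  have hS : 0 < (H ^ 2 + V ^ 2) ^ ((1:ℝ)/2) := Real.rpow_pos_of_pos hQ _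
  have hS_sq : ((H ^ 2 + V ^ 2) ^ ((1:ℝ)/2)) ^ 2 = H ^ 2 + V ^ 2 := by
    rw [← Real.rpow_natCast, ← Real.rpow_mul hQ.le]
    norm_num
  have hS_cube : (H ^ 2 + V ^ 2) ^ ((3:ℝ)/2) = ((H ^ 2 + V ^ 2) ^ ((1:ℝ)/2)) ^ 3 := by
    rw [← Real.rpow_natCast _ 3, ← Real.rpow_mul hQ.le]
    norm_num
  rw [surfaceAcceleration, hS_cube]
  set S := (H ^ 2 + V ^ 2) ^ ((1:ℝ)/2)
  rw [← hS_sq]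
  have hfactor : -e - κ * ((2 * H ^ 2 + 3 * V ^ 2) / S ^ 3 - w * H / S ^ 3 - z * V / (H * S)) =
      κ * H / S ^ 3 * (w - (κ⁻¹ * (S ^ 3 / H) * e + (2 * H ^ 2 + 3 * V ^ 2) / H
        - z * V * S ^ 2 / H ^ 2)) := by
    field_simp
    ring
  rw [hfactor, mul_eq_zero_iff_left (by positivity), sub_eq_zero]

/-- The right-hand side of the Bernoulli condition `FF = 0` solved for `h''`, as a function of
`θ` and `((h θ, h' θ), ℘ θ)`. -/
noncomputable def bernoulliAcceleration (g R σ Patm a b : ℝ) (ρ ρθ : ℝ → ℝ → ℝ) (F : ℝ → ℝ)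
    (θ : ℝ) (z : (ℝ × ℝ) × ℝ) : ℝ :=
  surfaceAcceleration (σ / (R * Patm)) (1 + z.1.1) z.1.2 (Real.cot θ)
    (z.2 - bulkPressure g R Patm a b ρ ρθ F θ z.1.1)

variable {g R σ Patm a b θ : ℝ} {ρ ρθ : ℝ → ℝ → ℝ} {F : ℝ → ℝ}

theorem FF_eq_zero_iff {h ℘ : ℝ → ℝ} (hκ : σ / (R * Patm) ≠ 0) (hh : 0 < 1 + h θ) :
    FF g R σ Patm a b ρ ρθ F h ℘ θ = 0 ↔ deriv (deriv h) θ =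
      bernoulliAcceleration g R σ Patm a b ρ ρθ F θ (oneJet h θ, ℘ θ) := by
  refine (Eq.congr_left ?_).trans (surfaceTension_balance_iff hκ hh)
  unfold FF bulkPressure oneJet
  ring

theorem lipschitzFamilyAt_bernoulliAcceleration {z : (ℝ × ℝ) × ℝ} (ha : 0 < a) (hR : 0 < R)
    (hρ : ContinuousOn (Function.uncurry ρ) (Ioi 0 ×ˢ Ioo 0 Real.pi))
    (hρθ : ContinuousOn (Function.uncurry ρθ) (Ioi 0 ×ˢ Ioo 0 Real.pi))
    (hF : ContinuousOn F (Ioi 0)) (hθ : θ ∈ Ioo 0 Real.pi) (hz : 0 < 1 + z.1.1) :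
    LipschitzFamilyAt (bernoulliAcceleration g R σ Patm a b ρ ρθ F) θ z := by
  have hid : LipschitzFamilyAt (fun (_ : ℝ) (z : (ℝ × ℝ) × ℝ) => z) θ z :=
    .of_contDiffAt (by unfold Function.uncurry; fun_prop)
  have hbulk : LipschitzFamilyAt
      (fun θ (z : (ℝ × ℝ) × ℝ) => bulkPressure g R Patm a b ρ ρθ F θ z.1.1) θ z :=
    (lipschitzFamilyAt_bulkPressure ha hR hρ hρθ hF hθ hz).comp
      (f := fun _ (z : (ℝ × ℝ) × ℝ) => z.1.1)
      (.of_contDiffAt (by unfold Function.uncurry; fun_prop))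
  have hcot : LipschitzFamilyAt (fun θ (_ : (ℝ × ℝ) × ℝ) => Real.cot θ) θ z :=
    .of_continuousAt (continuousAt_cot (Real.sin_pos_of_mem_Ioo hθ).ne')
  have hacc : LipschitzFamilyAt (fun (_ : ℝ) (w : ((ℝ × ℝ) × ℝ) × ℝ × ℝ) =>
      surfaceAcceleration (σ / (R * Patm)) (1 + w.1.1.1) w.1.1.2 w.2.1 (w.1.2 - w.2.2)) θ
      (z, Real.cot θ, bulkPressure g R Patm a b ρ ρθ F θ z.1.1) :=
    .of_contDiffAt (contDiffAt_surfaceAcceleration _ (by fun_prop) (by fun_prop) (by fun_prop)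
      (by fun_prop) hz)
  have hcomp := hacc.comp (f := fun θ (z : (ℝ × ℝ) × ℝ) =>
    (z, Real.cot θ, bulkPressure g R Patm a b ρ ρθ F θ z.1.1)) (hid.prodMk (hcot.prodMk hbulk))
  exact hcomp

end SurfaceTension

theorem Istrip_subset_Ioo : Istrip ⊆ Ioo 0 Real.pi :=
  Icc_subset_Ioo (by linarith [Real.pi_gt_three]) (by linarith [Real.pi_gt_three])

theorem free_surface_exists_uniquely_general {g R σ Patm a b θ₁ θ₂ θ₀ : ℝ} (hR : 0 < R)
    (hσ : σ ≠ 0) (hP : Patm ≠ 0) (ha : 0 < a) (hI : Icc θ₁ θ₂ ⊆ Ioo 0 Real.pi)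
    (hθ₀ : θ₀ ∈ Icc θ₁ θ₂) {ρ ρθ : ℝ → ℝ → ℝ}
    (hρ : ContDiffOn ℝ 1 (Function.uncurry ρ) (Ioi 0 ×ˢ Ioo 0 Real.pi))
    (hρθ : ∀ r ∈ Ioi (0 : ℝ), ∀ t ∈ Ioo 0 Real.pi, HasDerivAt (ρ r) (ρθ r t) t)
    {F : ℝ → ℝ} (hF : ContinuousOn F (Ioi 0)) {γ : ℝ → ℝ} (hγ : ContDiff ℝ 2 γ)
    (hγpos : ∀ θ ∈ Icc θ₁ θ₂, 0 < 1 + γ θ) {℘γ : ℝ → ℝ}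
    (h℘cont : ContinuousOn ℘γ (Icc θ₁ θ₂))
    (h℘ : ∀ θ ∈ Icc θ₁ θ₂, FF g R σ Patm a b ρ ρθ F γ ℘γ θ = 0) :
    LocallyWellPosed (Icc θ₁ θ₂) θ₀ (FF g R σ Patm a b ρ ρθ F) γ ℘γ := by
  have hκ : σ / (R * Patm) ≠ 0 := div_ne_zero hσ (mul_ne_zero hR.ne' hP)
  have hρθc := continuousOn_partialDeriv_snd isOpen_Ioi isOpen_Ioo hρ hρθ
  have hΩ : IsOpen {z : (ℝ × ℝ) × ℝ | 0 < 1 + z.1.1} := isOpen_lt (by fun_prop) (by fun_prop)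
  exact locallyWellPosed_of_lipschitzFamilyAt hΩ
    (fun θ hθ z hz => lipschitzFamilyAt_bernoulliAcceleration ha hR hρ.continuousOn hρθc hF
      (hI hθ) hz)
    (fun h ℘ θ _ hh => FF_eq_zero_iff hκ hh) hγ h℘cont hγpos h℘ hθ₀

/-- Implicit function theorem for the free surface: given a reference surface
`γ` with corresponding surface pressure `℘_γ` (so that `𝔽(γ, ℘_γ) = 0`),
every sufficiently small (in supremum norm) perturbation `℘` of `℘_γ`
determines a unique free surface `h` close to `γ` in `C²` with
`h(π/2) = γ(π/2)`, `h'(π/2) = γ'(π/2)` and `𝔽(h, ℘) = 0`; moreover the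
solution map `℘ ↦ h` sends `℘_γ` to `γ` and is continuous from the supremum
norm to the `C²` norm. -/
theorem free_surface_exists_uniquely
    (g R σ Patm a b : ℝ)
    (hg : 0 < g) (hR : 0 < R) (hσ : 0 < σ) (hP : 0 < Patm) (ha : 0 < a)
    (ρ ρθ : ℝ → ℝ → ℝ)
    (hρ : ContDiffOn ℝ 2 (fun q : ℝ × ℝ => ρ q.1 q.2)
      (Set.Ioi 0 ×ˢ Set.Ioo 0 Real.pi))
    (hρθ : ∀ r ∈ Set.Ioi (0:ℝ), ∀ t ∈ Set.Ioo 0 Real.pi,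
      HasDerivAt (fun u => ρ r u) (ρθ r t) t)
    (F : ℝ → ℝ) (hF : ContDiffOn ℝ 1 F (Set.Ioi 0))
    (γ : ℝ → ℝ) (hγ : ContDiff ℝ 2 γ)
    (hγpos : ∀ θ ∈ Istrip, 0 < 1 + γ θ)
    (℘γ : ℝ → ℝ) (h℘cont : ContinuousOn ℘γ Istrip)
    (h℘ : ∀ θ ∈ Istrip, FF g R σ Patm a b ρ ρθ F γ ℘γ θ = 0) :
    ∃ δ > (0:ℝ), ∃ η > (0:ℝ), ∃ S : (ℝ → ℝ) → (ℝ → ℝ),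
      (∀ ℘ : ℝ → ℝ, ContinuousOn ℘ Istrip →
        (∀ θ ∈ Istrip, |℘ θ - ℘γ θ| < δ) →
        (ContDiff ℝ 2 (S ℘) ∧
          S ℘ (Real.pi / 2) = γ (Real.pi / 2) ∧
          deriv (S ℘) (Real.pi / 2) = deriv γ (Real.pi / 2) ∧
          (∀ θ ∈ Istrip,
            |S ℘ θ - γ θ| + |deriv (S ℘) θ - deriv γ θ|
              + |deriv (deriv (S ℘)) θ - deriv (deriv γ) θ| < η) ∧
          (∀ θ ∈ Istrip, FF g R σ Patm a b ρ ρθ F (S ℘) ℘ θ = 0) ∧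
          (∀ h : ℝ → ℝ, ContDiff ℝ 2 h →
            h (Real.pi / 2) = γ (Real.pi / 2) →
            deriv h (Real.pi / 2) = deriv γ (Real.pi / 2) →
            (∀ θ ∈ Istrip,
              |h θ - γ θ| + |deriv h θ - deriv γ θ|
                + |deriv (deriv h) θ - deriv (deriv γ) θ| < η) →
            (∀ θ ∈ Istrip, FF g R σ Patm a b ρ ρθ F h ℘ θ = 0) →
            Set.EqOn h (S ℘) Istrip))) ∧
      Set.EqOn (S ℘γ) γ Istrip ∧
      (∀ ℘₁ : ℝ → ℝ, ContinuousOn ℘₁ Istrip →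
        (∀ θ ∈ Istrip, |℘₁ θ - ℘γ θ| < δ) →
        ∀ e > (0:ℝ), ∃ d > (0:ℝ), ∀ ℘₂ : ℝ → ℝ, ContinuousOn ℘₂ Istrip →
          (∀ θ ∈ Istrip, |℘₂ θ - ℘γ θ| < δ) →
          (∀ θ ∈ Istrip, |℘₂ θ - ℘₁ θ| < d) →
          ∀ θ ∈ Istrip,
            |S ℘₂ θ - S ℘₁ θ| + |deriv (S ℘₂) θ - deriv (S ℘₁) θ|
              + |deriv (deriv (S ℘₂)) θ - deriv (deriv (S ℘₁)) θ| < e) :=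
  free_surface_exists_uniquely_general hR hσ.ne' hP.ne' ha Istrip_subset_Ioo
    (by constructor <;> norm_num) (hρ.of_le one_le_two) hρθ hF.continuousOn hγ hγpos h℘cont h℘
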